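/- Let n, m be integers with 3 ≤ n < m. Define G = −10 + 19m − 12m^2 + 19n − 6mn − 8m^2 n − 12n^2 − 8mn^2 + 8m^2 n^2, H = 22 − 22m − 22n + 15mn − 20m^2 n − 20mn^2 + 20m^2 n^2, F = 28 − 38m − 14m^2 + 24m^3 − 38n − 364mn + 969m^2 n − 696m^3 n + 144m^4 n − 14n^2 + 969mn^2 − 1746m^2 n^2 + 828m^3 n^2 − 112m^4 n^2 + 24n^3 − 696mn^3 + 828m^2 n^3 − 32m^3 n^3 − 64m^4 n^3 + 144mn^4 − 112m^2 n^4 − 64m^3 n^4 + 32m^4 n^4, and set c* = −mn(3 − 4m − 4n + 4mn)/(m + n − 1) and λ* = −(m + n − 1)·F / (7(m−1)(n−1)(4mn−1)·G·H). Then G ≠ 0, H ≠ 0, and the solution set {(c,λ) ∈ ℂ × ℂ : q_n(c,λ) = 0 and q_m(c,λ) = 0} equals {(−24, −1/245), (1/2, −2/49), (c*, λ*)}. -/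

import Mathlib

/-- The type-D truncation polynomial `q_n(c,λ)`. -/
noncomputable def qD (n c lam : ℂ) : ℂ :=
  7 * lam * (c - 1) * (22 + 5 * c)
      * (-3 * c + 10 * n - 2 * c * n - 19 * n ^ 2 + 2 * c * n ^ 2 + 12 * n ^ 3)
    - (-6 * c - 9 * c ^ 2 - 28 * n + 120 * c * n - 2 * c ^ 2 * n + 10 * n ^ 2
        - 147 * c * n ^ 2 + 2 * c ^ 2 * n ^ 2 + 24 * n ^ 3 + 36 * c * n ^ 3)

/-!
As a polynomial in `λ`, `q_n` has degree at most one. Eliminating `λ` between `q_n` and `q_m`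
leaves, up to the nonzero factor `12 (m - n) (m + n - 1)`, the cubic
`(c + 24) (c - 1/2) (c - c*)`. On each of the three vertical lines over its roots `q_n` and `q_m`
are multiples of one common linear form `λ - λ₀`, and they are not both identically zero there, so
each line carries exactly one intersection point.
-/

namespace TypeD

lemma mul_eq_zero_and_mul_eq_zero_iff {M : Type*} [MulZeroClass M] [NoZeroDivisors M] {a b x : M}
    (hab : a ≠ 0 ∨ b ≠ 0) : a * x = 0 ∧ b * x = 0 ↔ x = 0 := by
  simp only [mul_eq_zero]
  tauto

/-- The polynomial `G` of the paper, symmetric in `n` and `m`; it is the part of `lamFactor` at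
`c = c*` that `n` and `m` share (see `lamFactor_cStar`). -/
def G {R : Type*} [CommRing R] (n m : R) : R :=
  -10 + 19 * m - 12 * m ^ 2 + 19 * n - 6 * m * n
    - 8 * m ^ 2 * n - 12 * n ^ 2 - 8 * m * n ^ 2 + 8 * m ^ 2 * n ^ 2

/-- The polynomial `H` of the paper, symmetric in `n` and `m`; it is the numerator of `22 + 5 c*`,
up to sign (see `twentyTwo_add_five_mul_cStar`). -/
def H {R : Type*} [CommRing R] (n m : R) : R :=
  22 - 22 * m - 22 * n + 15 * m * n - 20 * m ^ 2 * n
    - 20 * m * n ^ 2 + 20 * m ^ 2 * n ^ 2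

/-- The polynomial `F` of the paper, symmetric in `n` and `m`; it is the part of `lamFree` at
`c = c*` that `n` and `m` share (see `lamFree_cStar`). -/
def F {R : Type*} [CommRing R] (n m : R) : R :=
  28 - 38 * m - 14 * m ^ 2 + 24 * m ^ 3 - 38 * n - 364 * m * n
    + 969 * m ^ 2 * n - 696 * m ^ 3 * n + 144 * m ^ 4 * n - 14 * n ^ 2
    + 969 * m * n ^ 2 - 1746 * m ^ 2 * n ^ 2 + 828 * m ^ 3 * n ^ 2
    - 112 * m ^ 4 * n ^ 2 + 24 * n ^ 3 - 696 * m * n ^ 3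
    + 828 * m ^ 2 * n ^ 3 - 32 * m ^ 3 * n ^ 3 - 64 * m ^ 4 * n ^ 3
    + 144 * m * n ^ 4 - 112 * m ^ 2 * n ^ 4 - 64 * m ^ 3 * n ^ 4
    + 32 * m ^ 4 * n ^ 4

section Positivity

variable {R : Type*} [CommRing R] [PartialOrder R] [IsStrictOrderedRing R] {n m : R}

lemma G_pos (hn : 3 ≤ n) (hm : 3 ≤ m) : 0 < G n m := by
  obtain ⟨a, ha, rfl⟩ := exists_nonneg_add_of_le hn
  obtain ⟨b, hb, rfl⟩ := exists_nonneg_add_of_le hm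
  have expansion : G (3 + a) (3 + b) = 50 + 145 * (a + b) + 36 * (a ^ 2 + b ^ 2) + 186 * a * b
      + 40 * a * b * (a + b) + 8 * a ^ 2 * b ^ 2 := by
    unfold G; ring
  rw [expansion]
  positivity

lemma H_pos (hn : 3 ≤ n) (hm : 3 ≤ m) : 0 < H n m := by
  obtain ⟨a, ha, rfl⟩ := exists_nonneg_add_of_le hn
  obtain ⟨b, hb, rfl⟩ := exists_nonneg_add_of_le hm
  have expansion : H (3 + a) (3 + b) = 565 + 563 * (a + b) + 120 * (a ^ 2 + b ^ 2) + 495 * a * b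
      + 100 * a * b * (a + b) + 20 * a ^ 2 * b ^ 2 := by
    unfold H; ring
  rw [expansion]
  positivity

end Positivity

/-- The factor depending on `n` of the coefficient of `λ` in `q_n(c,λ)`; the remaining factor is
`7 (c - 1) (22 + 5 c)`. -/
def lamFactor (n c : ℂ) : ℂ :=
  -3 * c + 10 * n - 2 * c * n - 19 * n ^ 2 + 2 * c * n ^ 2 + 12 * n ^ 3

/-- The negative of the part of `q_n(c,λ)` that does not involve `λ`. -/
def lamFree (n c : ℂ) : ℂ :=
  -6 * c - 9 * c ^ 2 - 28 * n + 120 * c * n - 2 * c ^ 2 * n + 10 * n ^ 2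
    - 147 * c * n ^ 2 + 2 * c ^ 2 * n ^ 2 + 24 * n ^ 3 + 36 * c * n ^ 3

/-- The `c`-coordinate `c*` of the intersection point of `V(J_n)` and `V(J_m)` that depends on
`n` and `m`. It is meaningful only for `m + n ≠ 1`. -/
noncomputable def cStar (n m : ℂ) : ℂ :=
  -m * n * (3 - 4 * m - 4 * n + 4 * m * n) / (m + n - 1)

/-- The denominator of `λ*`. -/
def lamStarDenom (n m : ℂ) : ℂ :=
  7 * (m - 1) * (n - 1) * (4 * m * n - 1) * G n m * H n m

/-- The `λ`-coordinate `λ*` of the intersection point over `c*`. It is meaningful only where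
`lamStarDenom` does not vanish. -/
noncomputable def lamStar (n m : ℂ) : ℂ :=
  -(m + n - 1) * F n m / lamStarDenom n m

/-- Pairs of complex parameters for which `c*` and `λ*` are defined and `V(J_n)`, `V(J_m)` are
distinct curves without the line `c = -24` in common. -/
structure Generic (n m : ℂ) : Prop where
  ne : n ≠ m
  add_sub_one_ne_zero : m + n - 1 ≠ 0
  left_sub_one_ne_zero : n - 1 ≠ 0
  right_sub_one_ne_zero : m - 1 ≠ 0
  four_mul_sub_one_ne_zero : 4 * m * n - 1 ≠ 0
  G_ne_zero : G n m ≠ 0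
  H_ne_zero : H n m ≠ 0
  -- For a root `k` of this cubic, `q_k` vanishes identically on `c = -24`.
  line_not_common : (n - 4) * (4 * n - 9) * (3 * n + 2) ≠ 0 ∨
    (m - 4) * (4 * m - 9) * (3 * m + 2) ≠ 0

lemma line_cubic_ne_zero {k : ℤ} (hk : k ≠ 4) :
    (k - 4) * (4 * k - 9) * (3 * k + 2) ≠ 0 :=
  mul_ne_zero (mul_ne_zero (by lia) (by lia)) (by lia)

lemma Generic.intCast {n m : ℤ} (hn : 3 ≤ n) (hm : 3 ≤ m) (hnm : n ≠ m) :
    Generic (n : ℂ) (m : ℂ) where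
  ne := mod_cast hnm
  add_sub_one_ne_zero := mod_cast (by lia : m + n - 1 ≠ 0)
  left_sub_one_ne_zero := mod_cast (by lia : n - 1 ≠ 0)
  right_sub_one_ne_zero := mod_cast (by lia : m - 1 ≠ 0)
  four_mul_sub_one_ne_zero := mod_cast (by nlinarith : (0 : ℤ) < 4 * m * n - 1).ne'
  G_ne_zero := by
    have h := (G_pos hn hm).ne'
    unfold G at h ⊢
    exact_mod_cast h
  H_ne_zero := by
    have h := (H_pos hn hm).ne'
    unfold H at h ⊢
    exact_mod_cast h
  line_not_common := by
    rcases eq_or_ne n 4 with rfl | hn4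
    · exact .inr (mod_cast line_cubic_ne_zero hnm.symm)
    · exact .inl (mod_cast line_cubic_ne_zero hn4)

lemma cStar_comm (n m : ℂ) : cStar n m = cStar m n := by
  unfold cStar; ring

lemma lamStarDenom_comm (n m : ℂ) : lamStarDenom n m = lamStarDenom m n := by
  unfold lamStarDenom G H; ring

lemma lamStar_comm (n m : ℂ) : lamStar n m = lamStar m n := by
  unfold lamStar
  rw [lamStarDenom_comm n m]
  unfold F; ring

lemma qD_eq (n c l : ℂ) :
    qD n c l = 7 * l * (c - 1) * (22 + 5 * c) * lamFactor n c - lamFree n c :=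
  rfl

variable {n m : ℂ}

lemma lamFactor_mul_qD_sub (hs : m + n - 1 ≠ 0) (c l : ℂ) :
    lamFactor m c * qD n c l - lamFactor n c * qD m c l =
      12 * (m - n) * (m + n - 1) * ((c + 24) * (c - 1 / 2) * (c - cStar n m)) := by
  unfold cStar lamFactor qD
  field_simp
  ring

lemma qD_neg_twentyFour (n l : ℂ) :
    qD n (-24) l = 17150 * ((n - 4) * (4 * n - 9) * (3 * n + 2)) * (l - -1 / 245) := by
  unfold qD; ring

lemma qD_half (n l : ℂ) :
    qD n (1 / 2) l = -(1029 / 8) * (2 * n - 1) ^ 3 * (l - -2 / 49) := by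
  unfold qD; ring

lemma cStar_sub_one (hs : m + n - 1 ≠ 0) :
    cStar n m - 1 = -((m - 1) * (n - 1) * (4 * m * n - 1)) / (m + n - 1) := by
  unfold cStar; field_simp; ring

lemma twentyTwo_add_five_mul_cStar (hs : m + n - 1 ≠ 0) :
    22 + 5 * cStar n m = -H n m / (m + n - 1) := by
  unfold cStar H; field_simp; ring

lemma lamFactor_cStar (hs : m + n - 1 ≠ 0) :
    lamFactor n (cStar n m) = -(n * (n - 1) * G n m) / (m + n - 1) := by
  unfold lamFactor cStar G; field_simp; ring

lemma lamFree_cStar (hs : m + n - 1 ≠ 0) :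
    lamFree n (cStar n m) = n * (n - 1) * F n m / (m + n - 1) ^ 2 := by
  unfold lamFree cStar F; field_simp; ring

lemma qD_cStar (hs : m + n - 1 ≠ 0) (hd : lamStarDenom n m ≠ 0) (l : ℂ) :
    qD n (cStar n m) l =
      -(n * (n - 1)) * (lamStarDenom n m / (m + n - 1) ^ 3) * (l - lamStar n m) := by
  have key : lamStarDenom n m * lamStar n m = -(m + n - 1) * F n m := mul_div_cancel₀ _ hd
  calc qD n (cStar n m) l
      = -(n * (n - 1)) / (m + n - 1) ^ 3 * (lamStarDenom n m * l - -(m + n - 1) * F n m) := by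
        rw [qD_eq, cStar_sub_one hs, twentyTwo_add_five_mul_cStar hs, lamFactor_cStar hs,
          lamFree_cStar hs, lamStarDenom]
        field_simp
        ring
    _ = -(n * (n - 1)) * (lamStarDenom n m / (m + n - 1) ^ 3) * (l - lamStar n m) := by
        rw [← key]; ring

lemma Generic.lamStarDenom_ne_zero (h : Generic n m) : lamStarDenom n m ≠ 0 := by
  simp only [lamStarDenom, ne_eq, mul_eq_zero, not_or]
  exact ⟨⟨⟨⟨⟨by norm_num, h.right_sub_one_ne_zero⟩, h.left_sub_one_ne_zero⟩,
    h.four_mul_sub_one_ne_zero⟩, h.G_ne_zero⟩, h.H_ne_zero⟩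

lemma qD_neg_twentyFour_eq_zero_iff
    (h : (n - 4) * (4 * n - 9) * (3 * n + 2) ≠ 0 ∨ (m - 4) * (4 * m - 9) * (3 * m + 2) ≠ 0)
    (l : ℂ) :
    qD n (-24) l = 0 ∧ qD m (-24) l = 0 ↔ l = -1 / 245 := by
  rw [qD_neg_twentyFour, qD_neg_twentyFour, mul_eq_zero_and_mul_eq_zero_iff, sub_eq_zero]
  exact h.imp (mul_ne_zero (by norm_num)) (mul_ne_zero (by norm_num))

lemma qD_half_eq_zero_iff (hnm : n ≠ m) (l : ℂ) :
    qD n (1 / 2) l = 0 ∧ qD m (1 / 2) l = 0 ↔ l = -2 / 49 := by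
  rw [qD_half, qD_half, mul_eq_zero_and_mul_eq_zero_iff, sub_eq_zero]
  by_contra! both_zero
  have hn : 2 * n - 1 = 0 := by simpa using both_zero.1
  have hm : 2 * m - 1 = 0 := by simpa using both_zero.2
  exact hnm (by linear_combination (hn - hm) / 2)

lemma qD_cStar_eq_zero_iff (h : Generic n m) (l : ℂ) :
    qD n (cStar n m) l = 0 ∧ qD m (cStar n m) l = 0 ↔ l = lamStar n m := by
  have hs := h.add_sub_one_ne_zero
  have hd := h.lamStarDenom_ne_zero
  have qD_right : qD m (cStar n m) l =
      -(m * (m - 1)) * (lamStarDenom n m / (m + n - 1) ^ 3) * (l - lamStar n m) := by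
    rw [cStar_comm, lamStar_comm, lamStarDenom_comm, add_comm m n]
    exact qD_cStar (add_comm m n ▸ hs) (lamStarDenom_comm n m ▸ hd) l
  rw [qD_cStar hs hd, qD_right, mul_eq_zero_and_mul_eq_zero_iff, sub_eq_zero]
  have hscale : lamStarDenom n m / (m + n - 1) ^ 3 ≠ 0 := div_ne_zero hd (pow_ne_zero 3 hs)
  have not_both_zero : n ≠ 0 ∨ m ≠ 0 := by
    by_contra! both_zero
    exact h.ne (both_zero.1.trans both_zero.2.symm)
  exact not_both_zero.imp
    (fun hn ↦ mul_ne_zero (neg_ne_zero.mpr (mul_ne_zero hn h.left_sub_one_ne_zero)) hscale)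
    (fun hm ↦ mul_ne_zero (neg_ne_zero.mpr (mul_ne_zero hm h.right_sub_one_ne_zero)) hscale)

lemma c_eq_of_qD_eq_zero (hnm : n ≠ m) (hs : m + n - 1 ≠ 0) {c l : ℂ} (hqn : qD n c l = 0)
    (hqm : qD m c l = 0) : c = -24 ∨ c = 1 / 2 ∨ c = cStar n m := by
  have cubic : 12 * (m - n) * (m + n - 1) * ((c + 24) * (c - 1 / 2) * (c - cStar n m)) = 0 := by
    rw [← lamFactor_mul_qD_sub hs c l, hqn, hqm, mul_zero, mul_zero, sub_zero]
  have hlead : 12 * (m - n) * (m + n - 1) ≠ 0 :=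
    mul_ne_zero (mul_ne_zero (by norm_num) (sub_ne_zero.mpr hnm.symm)) hs
  simpa only [mul_eq_zero, hlead, false_or, sub_eq_zero, add_eq_zero_iff_eq_neg, or_assoc]
    using cubic

end TypeD

open TypeD in
theorem typeD_truncation_curves_intersection_general {n m : ℂ} (h : Generic n m) :
    {p : ℂ × ℂ | qD n p.1 p.2 = 0 ∧ qD m p.1 p.2 = 0} =
      {(-24, -1 / 245), (1 / 2, -2 / 49), (cStar n m, lamStar n m)} := by
  ext ⟨c, l⟩
  simp only [Set.mem_ofPred_eq, Set.mem_insert_iff, Set.mem_singleton_iff, Prod.mk.injEq]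
  constructor
  · rintro ⟨hqn, hqm⟩
    rcases c_eq_of_qD_eq_zero h.ne h.add_sub_one_ne_zero hqn hqm with rfl | rfl | rfl
    · exact .inl ⟨rfl, (qD_neg_twentyFour_eq_zero_iff h.line_not_common l).mp ⟨hqn, hqm⟩⟩
    · exact .inr (.inl ⟨rfl, (qD_half_eq_zero_iff h.ne l).mp ⟨hqn, hqm⟩⟩)
    · exact .inr (.inr ⟨rfl, (qD_cStar_eq_zero_iff h l).mp ⟨hqn, hqm⟩⟩)
  · rintro (⟨rfl, hl⟩ | ⟨rfl, hl⟩ | ⟨rfl, hl⟩)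
    · exact (qD_neg_twentyFour_eq_zero_iff h.line_not_common l).mpr hl
    · exact (qD_half_eq_zero_iff h.ne l).mpr hl
    · exact (qD_cStar_eq_zero_iff h l).mpr hl

/-- For `3 ≤ n < m`, the intersection of the truncation curves `V(J_n)` and
`V(J_m)` consists of exactly the three points `(-24, -1/245)`, `(1/2, -2/49)`
and `(c*, λ*)`. -/
theorem typeD_truncation_curves_intersection (n m : ℤ) (hn : 3 ≤ n) (hnm : n < m)
    (nn mm : ℂ) (hnn : nn = (n : ℂ)) (hmm : mm = (m : ℂ))
    (G H F cs ls : ℂ)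
    (hG : G = -10 + 19 * mm - 12 * mm ^ 2 + 19 * nn - 6 * mm * nn
      - 8 * mm ^ 2 * nn - 12 * nn ^ 2 - 8 * mm * nn ^ 2 + 8 * mm ^ 2 * nn ^ 2)
    (hH : H = 22 - 22 * mm - 22 * nn + 15 * mm * nn - 20 * mm ^ 2 * nn
      - 20 * mm * nn ^ 2 + 20 * mm ^ 2 * nn ^ 2)
    (hF : F = 28 - 38 * mm - 14 * mm ^ 2 + 24 * mm ^ 3 - 38 * nn - 364 * mm * nn
      + 969 * mm ^ 2 * nn - 696 * mm ^ 3 * nn + 144 * mm ^ 4 * nn - 14 * nn ^ 2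
      + 969 * mm * nn ^ 2 - 1746 * mm ^ 2 * nn ^ 2 + 828 * mm ^ 3 * nn ^ 2
      - 112 * mm ^ 4 * nn ^ 2 + 24 * nn ^ 3 - 696 * mm * nn ^ 3
      + 828 * mm ^ 2 * nn ^ 3 - 32 * mm ^ 3 * nn ^ 3 - 64 * mm ^ 4 * nn ^ 3
      + 144 * mm * nn ^ 4 - 112 * mm ^ 2 * nn ^ 4 - 64 * mm ^ 3 * nn ^ 4
      + 32 * mm ^ 4 * nn ^ 4)
    (hcs : cs = -mm * nn * (3 - 4 * mm - 4 * nn + 4 * mm * nn) / (mm + nn - 1))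
    (hls : ls = -(mm + nn - 1) * F
        / (7 * (mm - 1) * (nn - 1) * (4 * mm * nn - 1) * G * H)) :
    G ≠ 0 ∧ H ≠ 0 ∧
      {p : ℂ × ℂ | qD nn p.1 p.2 = 0 ∧ qD mm p.1 p.2 = 0}
        = ({((-24 : ℂ), (-1/245 : ℂ)), ((1/2 : ℂ), (-2/49 : ℂ)), (cs, ls)} :
            Set (ℂ × ℂ)) := by
  subst hnn hmm hG hH hF hcs hls
  have h := TypeD.Generic.intCast hn (hn.trans hnm.le) hnm.ne
  exact ⟨h.G_ne_zero, h.H_ne_zero, typeD_truncation_curves_intersection_general h⟩
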